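/- arXiv:2504.18674 — 4 statements merged into one kernel-verified Lean document; each statement's English description precedes it below -/
import Mathlib

section
/- Let h ≥ 1 be an integer, and for i ∈ {1,…,h} let ν_i ∈ (0,1), c_i > 0 and m_i ∈ ℝ. Then for every (x_1,…,x_h) ∈ ℝ^h, as an identity in [0,∞], sup_{(θ_1,…,θ_h) ∈ ℝ^h} { Σ_{i=1}^h θ_i x_i − Σ_{i=1}^h (c_i m_i θ_i · 1{θ_i m_i ≥ 0})^{1/ν_i} } = Σ_{i=1}^h V_{ν_i, c_i m_i}(x_i). (This is the explicit expression of the moderate-deviation rate function of Proposition 4.1 in the case m ≠ 0, when ν_0 < min{ν_1,…,ν_h}.) -/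
open Set Filter
open scoped ENNReal

/-- `V_{ν,m} : ℝ → [0,∞]`: for `m ≠ 0`,
`V_{ν,m}(x) = (ν^{ν/(1-ν)} - ν^{1/(1-ν)}) (x/m)^{1/(1-ν)}` if `x/m ≥ 0` and `+∞` if `x/m < 0`;
for `m = 0`, `V_{ν,0}(0) = 0` and `V_{ν,0}(x) = +∞` for `x ≠ 0`. -/
noncomputable def Vfun (ν m x : ℝ) : EReal :=
  if m = 0 then (if x = 0 then (0 : EReal) else ⊤)
  else if 0 ≤ x / m then
    (((ν ^ (ν / (1 - ν)) - ν ^ (1 / (1 - ν))) * (x / m) ^ (1 / (1 - ν)) : ℝ) : EReal)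
  else ⊤

lemma aux_young (ν y r : ℝ) (h0 : 0 < ν) (h1 : ν < 1) (hy : 0 ≤ y) (hr : 0 ≤ r) :
    y * r - y ^ (1 / ν) ≤ (ν ^ (ν / (1 - ν)) - ν ^ (1 / (1 - ν))) * r ^ (1 / (1 - ν)) := by
  have h2 : 0 < 1 - ν := by linarith
  have hpq : (1 / ν).HolderConjugate (1 / (1 - ν)) := by
    rw [Real.holderConjugate_iff]
    refine ⟨by rw [lt_div_iff₀ h0]; linarith, by simp⟩
  have hp : 0 < ν ^ ν := Real.rpow_pos_of_pos h0 _
  have := Real.young_inequality_of_nonneg (a := y / ν ^ ν) (b := r * ν ^ ν)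
    (by positivity) (by positivity) hpq
  have e1 : y / ν ^ ν * (r * ν ^ ν) = y * r := by field_simp
  have e2 : (y / ν ^ ν) ^ (1 / ν) / (1 / ν) = y ^ (1 / ν) := by
    rw [Real.div_rpow hy hp.le, ← Real.rpow_mul h0.le, mul_one_div_cancel h0.ne', Real.rpow_one]
    field_simp
  have e3 : ν ^ (1 / (1 - ν)) = ν ^ (ν / (1 - ν)) * ν := by
    rw [← Real.rpow_add_one h0.ne']; congr 1; field_simp; ring
  have e4 : (r * ν ^ ν) ^ (1 / (1 - ν)) / (1 / (1 - ν))
      = (ν ^ (ν / (1 - ν)) - ν ^ (1 / (1 - ν))) * r ^ (1 / (1 - ν)) := by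
    rw [Real.mul_rpow hr hp.le, ← Real.rpow_mul h0.le, e3, mul_one_div]
    field_simp
  rw [e1, e2, e4] at this
  linarith

lemma aux_eq (ν r : ℝ) (h0 : 0 < ν) (h1 : ν < 1) (hr : 0 ≤ r) :
    (ν * r) ^ (ν / (1 - ν)) * r - ((ν * r) ^ (ν / (1 - ν))) ^ (1 / ν)
      = (ν ^ (ν / (1 - ν)) - ν ^ (1 / (1 - ν))) * r ^ (1 / (1 - ν)) := by
  have h2 : 0 < 1 - ν := by linarith
  have e3 : r ^ (1 / (1 - ν)) = r ^ (ν / (1 - ν)) * r := by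
    rw [← Real.rpow_add_one' hr (by positivity)]; congr 1; field_simp; ring
  have e5 : ν / (1 - ν) * (1 / ν) = 1 / (1 - ν) := by field_simp
  rw [← Real.rpow_mul (by positivity), e5, Real.mul_rpow h0.le hr, Real.mul_rpow h0.le hr, e3]
  ring

lemma aux_one (ν c m x : ℝ) (h0 : 0 < ν) (h1 : ν < 1) (hc : 0 < c) :
    (Vfun ν (c * m) x = ⊤ ∧ ∀ B : ℝ, ∃ t : ℝ,
      B ≤ t * x - (c * m * t * (if 0 ≤ t * m then 1 else 0)) ^ (1 / ν)) ∨
    ∃ v : ℝ, Vfun ν (c * m) x = v ∧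
      (∃ t : ℝ, t * x - (c * m * t * (if 0 ≤ t * m then 1 else 0)) ^ (1 / ν) = v) ∧
      ∀ t : ℝ, t * x - (c * m * t * (if 0 ≤ t * m then 1 else 0)) ^ (1 / ν) ≤ v := by
  have hν : 1 / ν ≠ 0 := by positivity
  have h2 : 0 < 1 - ν := by linarith
  by_cases hm : m = 0
  · subst hm
    by_cases hx : x = 0
    · right
      refine ⟨0, by simp [Vfun, hx], ⟨0, by simp [Real.zero_rpow, h0.ne']⟩, fun t => ?_⟩
      simp [Real.zero_rpow, h0.ne', hx]
    · left
      refine ⟨by simp [Vfun, hx], fun B => ⟨B / x, ?_⟩⟩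
      simp [Real.zero_rpow, h0.ne', hx]
  · have ha : c * m ≠ 0 := mul_ne_zero hc.ne' hm
    by_cases hr : 0 ≤ x / (c * m)
    · right
      refine ⟨_, by rw [Vfun, if_neg ha, if_pos hr], ?_, ?_⟩
      · set r := x / (c * m) with hrd
        have hx : x = r * (c * m) := by rw [hrd]; field_simp
        have hy : 0 ≤ (ν * r) ^ (ν / (1 - ν)) := by positivity
        refine ⟨(ν * r) ^ (ν / (1 - ν)) / (c * m), ?_⟩
        rw [← aux_eq ν r h0 h1 hr]
        have : 0 ≤ (ν * r) ^ (ν / (1 - ν)) / (c * m) * m := by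
          have : (ν * r) ^ (ν / (1 - ν)) / (c * m) * m = (ν * r) ^ (ν / (1 - ν)) / c := by
            field_simp
          rw [this]; positivity
        rw [if_pos this, mul_one, mul_div_cancel₀ _ ha]
        congr 1
        rw [hx]; field_simp
      · intro t
        have hx : t * x = (c * m * t) * (x / (c * m)) := by field_simp
        split_ifs with ht
        · rw [mul_one, hx]
          exact aux_young ν _ _ h0 h1 (by nlinarith) hr
        · have := aux_young ν 0 _ h0 h1 le_rfl hr
          rw [Real.zero_rpow hν] at this
          rw [mul_zero, Real.zero_rpow hν, hx]
          have : c * m * t ≤ 0 := by nlinarith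
          nlinarith
    · left
      refine ⟨by rw [Vfun, if_neg ha, if_neg hr], fun B => ?_⟩
      push Not at hr
      have hx0 : x ≠ 0 := by rintro rfl; simp at hr
      have hxm : m / x < 0 := by
        have : m / x = (x / (c * m))⁻¹ / c := by field_simp
        rw [this]; exact div_neg_of_neg_of_pos (inv_lt_zero.2 hr) hc
      refine ⟨(|B| + 1) / x, ?_⟩
      have hn : ¬ 0 ≤ (|B| + 1) / x * m := by
        have : (|B| + 1) / x * m = (|B| + 1) * (m / x) := by ring
        rw [this, not_le]
        exact mul_neg_of_pos_of_neg (by positivity) hxm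
      rw [if_neg hn, mul_zero, Real.zero_rpow hν, div_mul_cancel₀ _ hx0]
      linarith [le_abs_self B]

lemma aux_coe_sum {ι : Type*} (s : Finset ι) (f : ι → ℝ) :
    ((∑ i ∈ s, f i : ℝ) : EReal) = ∑ i ∈ s, (f i : EReal) := by
  classical
  induction s using Finset.induction_on with
  | empty => simp
  | insert a s ha ih => rw [Finset.sum_insert ha, Finset.sum_insert ha, EReal.coe_add, ih]

lemma aux_sum_bot {ι : Type*} (s : Finset ι) (f : ι → EReal) (hf : ∀ i, f i ≠ ⊥) :
    ∑ i ∈ s, f i ≠ ⊥ := by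
  classical
  induction s using Finset.induction_on with
  | empty => simp
  | insert a s ha ih =>
    rw [Finset.sum_insert ha]
    simp [EReal.add_eq_bot_iff, hf, ih]

theorem stmt_6 (h : ℕ) (hh : 1 ≤ h) (ν c m : Fin h → ℝ)
    (hν : ∀ i, ν i ∈ Set.Ioo (0 : ℝ) 1) (hc : ∀ i, 0 < c i)
    (x : Fin h → ℝ) :
    (⨆ θ : Fin h → ℝ,
        (((∑ i, θ i * x i)
          - ∑ i, (c i * m i * θ i * (if 0 ≤ θ i * m i then 1 else 0)) ^ (1 / ν i) : ℝ) : EReal))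
      = ∑ i, Vfun (ν i) (c i * m i) (x i) := by
  classical
  have key := fun i => aux_one (ν i) (c i) (m i) (x i) (hν i).1 (hν i).2 (hc i)
  by_cases H : ∃ i, Vfun (ν i) (c i * m i) (x i) = ⊤
  · obtain ⟨i, hi⟩ := H
    have hnb : ∀ j, Vfun (ν j) (c j * m j) (x j) ≠ ⊥ := by
      intro j
      rcases key j with ⟨h1, -⟩ | ⟨v, h1, -⟩ <;> simp [h1]
    rw [← Finset.add_sum_erase _ _ (Finset.mem_univ i), hi,
      EReal.top_add_of_ne_bot (aux_sum_bot _ _ hnb)]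
    rcases key i with ⟨-, hB⟩ | ⟨v, hv, -⟩
    · rw [EReal.eq_top_iff_forall_lt]
      intro B
      obtain ⟨t, ht⟩ := hB (B + 1)
      refine lt_of_lt_of_le ?_ (le_iSup _ (Pi.single i t))
      rw [EReal.coe_lt_coe_iff, ← Finset.sum_sub_distrib, Finset.sum_eq_single i]
      · simp only [Pi.single_eq_same]
        linarith
      · intro j _ hj
        have : 1 / ν j ≠ 0 := one_div_ne_zero (hν j).1.ne'
        simp only [Pi.single_eq_of_ne hj, mul_zero, zero_mul, Real.zero_rpow this, sub_zero]
      · simp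
    · rw [hi] at hv
      exact absurd hv.symm (EReal.coe_ne_top v)
  · push Not at H
    have key2 := fun i => (key i).resolve_left (fun h => H i h.1)
    choose v hv ht hle using key2
    choose t ht using ht
    simp only [hv]
    rw [← aux_coe_sum]
    apply le_antisymm
    · refine iSup_le fun θ => ?_
      rw [EReal.coe_le_coe_iff, ← Finset.sum_sub_distrib]
      exact Finset.sum_le_sum fun i _ => hle i (θ i)
    · refine le_trans ?_ (le_iSup _ t)
      rw [EReal.coe_le_coe_iff, ← Finset.sum_sub_distrib]
      exact Finset.sum_le_sum fun i _ => (ht i).ge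
end

section
/- Let h ≥ 1 be an integer, ν_0, ν_1, …, ν_h ∈ (0,1), c_0, c_1, …, c_h > 0, and let κ_1, …, κ_h : ℝ → (−∞,∞] be convex functions with κ_i(0) = 0 and κ_i finite on a neighborhood of 0 for every i. Define Ψ(θ_1,…,θ_h) := Σ_{i=1}^h (c_i κ_i(θ_i))^{1/ν_i} · 1{κ_i(θ_i) ≥ 0} + (c_0 Σ_{i=1}^h κ_i(θ_i))^{1/ν_0} · 1{Σ_{i=1}^h κ_i(θ_i) ≥ 0} (with value +∞ if some κ_i(θ_i) = +∞), and I_LD(x_1,…,x_h) := sup_{(θ_1,…,θ_h) ∈ ℝ^h} { Σ_{i=1}^h θ_i x_i − Ψ(θ_1,…,θ_h) } ∈ [0,∞]. Then I_LD(x_1,…,x_h) = 0 if and only if (x_1,…,x_h) = (0,…,0). -/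
open Set Filter
open scoped ENNReal

/-- Map an extended real number to `[0,∞]` (negative values go to `0`). -/
noncomputable def erealToENNReal (x : EReal) : ℝ≥0∞ :=
  if x = ⊤ then ⊤ else ENNReal.ofReal x.toReal

/-- The Legendre-Fenchel transform `x ↦ sup_θ {⟨θ, x⟩ - Ψ(θ)}`, as a `[0,∞]`-valued function. -/
noncomputable def legendreENN {h : ℕ} (Ψ : (Fin h → ℝ) → ℝ≥0∞) (x : Fin h → ℝ) : ℝ≥0∞ :=
  erealToENNReal (⨆ θ : Fin h → ℝ, (((∑ i, θ i * x i : ℝ) : EReal) - (Ψ θ : EReal)))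

open Classical in
/-- The function `Ψ` of Proposition 3.1:
`Ψ(θ) = Σ_i (c_i κ_i(θ_i))^{1/ν_i} 1{κ_i(θ_i) ≥ 0} + (c_0 Σ_i κ_i(θ_i))^{1/ν_0} 1{Σ_i κ_i(θ_i) ≥ 0}`,
with `Ψ(θ) = ∞` if some `κ_i(θ_i) = ∞`. -/
noncomputable def PsiStar {h : ℕ} (ν0 : ℝ) (ν : Fin h → ℝ) (c0 : ℝ) (c : Fin h → ℝ)
    (κE : Fin h → ℝ → EReal) (θ : Fin h → ℝ) : ℝ≥0∞ :=
  if ∀ i, κE i (θ i) ≠ ⊤ then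
    ENNReal.ofReal
      ((∑ i, if 0 ≤ (κE i (θ i)).toReal then (c i * (κE i (θ i)).toReal) ^ (1 / ν i) else 0) +
        (if 0 ≤ ∑ i, (κE i (θ i)).toReal
          then (c0 * ∑ i, (κE i (θ i)).toReal) ^ (1 / ν0) else 0))
  else ⊤

lemma small_t (A B D p q : ℝ) (hp : 1 < p) (hq : 1 < q) (hD : 0 < D) :
    ∃ t : ℝ, 0 < t ∧ t ≤ 1 ∧ A * t ^ p + B * t ^ q < D * t := by
  have hcont : Continuous fun t : ℝ => A * t ^ (p - 1) + B * t ^ (q - 1) := by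
    have h1 := Real.continuous_rpow_const (q := p - 1) (by linarith)
    have h2 := Real.continuous_rpow_const (q := q - 1) (by linarith)
    fun_prop
  have h0 : A * (0 : ℝ) ^ (p - 1) + B * (0 : ℝ) ^ (q - 1) < D := by
    rw [Real.zero_rpow (by linarith), Real.zero_rpow (by linarith)]
    simpa using hD
  have hev := (hcont.tendsto 0).eventually (gt_mem_nhds h0)
  have hev2 := (hev.filter_mono (nhdsWithin_le_nhds (s := Set.Ioi 0))).and
    (Ioc_mem_nhdsGT (zero_lt_one' ℝ))
  obtain ⟨t, ht, ht0, ht1⟩ := hev2.exists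
  refine ⟨t, ht0, ht1, ?_⟩
  have e1 : t ^ p = t ^ (p - 1) * t := by
    rw [← Real.rpow_add_one ht0.ne', sub_add_cancel]
  have e2 : t ^ q = t ^ (q - 1) * t := by
    rw [← Real.rpow_add_one ht0.ne', sub_add_cancel]
  rw [e1, e2]
  have := mul_lt_mul_of_pos_right ht ht0
  linarith

lemma term_le (c k K t p : ℝ) (hc : 0 < c) (hK : 0 ≤ K) (ht : 0 ≤ t) (hp : 0 < p)
    (hk : k ≤ t * K) :
    (if 0 ≤ k then (c * k) ^ p else 0) ≤ (c * K) ^ p * t ^ p := by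
  rw [← Real.mul_rpow (by positivity) ht]
  split_ifs with h
  · apply Real.rpow_le_rpow (by positivity) _ hp.le
    nlinarith
  · positivity

/-- The reference rate function `I_LD`, the Legendre-Fenchel transform of `Ψ`, vanishes
uniquely at the origin: here the `κ_i : ℝ → (-∞,∞]` are convex, vanish at `0` and are finite
in a neighborhood of `0`. -/
theorem stmt_16 (h : ℕ) (hh : 1 ≤ h)
    (ν0 : ℝ) (ν : Fin h → ℝ) (hν0 : ν0 ∈ Set.Ioo (0 : ℝ) 1) (hν : ∀ i, ν i ∈ Set.Ioo (0 : ℝ) 1)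
    (c0 : ℝ) (c : Fin h → ℝ) (hc0 : 0 < c0) (hc : ∀ i, 0 < c i)
    (κE : Fin h → ℝ → EReal)
    (hκbot : ∀ i θ, κE i θ ≠ ⊥)
    (hκ0 : ∀ i, κE i 0 = 0)
    (hκconv : ∀ i (a b θ₁ θ₂ : ℝ), 0 ≤ a → 0 ≤ b → a + b = 1 →
      κE i (a * θ₁ + b * θ₂) ≤ (a : EReal) * κE i θ₁ + (b : EReal) * κE i θ₂)
    (hκfin : ∀ i, ∃ ε > (0 : ℝ), ∀ θ : ℝ, |θ| < ε → κE i θ ≠ ⊤)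
    (x : Fin h → ℝ) :
    legendreENN (PsiStar ν0 ν c0 c κE) x = 0 ↔ x = 0 := by
  constructor
  · intro hL
    by_contra hx
    obtain ⟨i, hi⟩ : ∃ i, x i ≠ 0 := by
      by_contra hcon
      push Not at hcon
      exact hx (funext hcon)
    obtain ⟨ε, hε, hfin⟩ := hκfin i
    obtain ⟨u, hu, hux⟩ : ∃ u : ℝ, |u| < ε ∧ 0 < u * x i := by
      rcases lt_or_gt_of_ne hi with hneg | hpos
      · refine ⟨-(ε / 2), ?_, by nlinarith⟩
        rw [abs_neg, abs_of_pos (by linarith)]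
        linarith
      · refine ⟨ε / 2, ?_, by positivity⟩
        rw [abs_of_pos (by linarith)]
        linarith
    set K := max (κE i u).toReal 0 with hKdef
    have hK : 0 ≤ K := le_max_right _ _
    have one_lt : ∀ a : ℝ, a ∈ Set.Ioo (0 : ℝ) 1 → 1 < 1 / a := fun a ha => by
      rw [lt_div_iff₀ ha.1]
      linarith [ha.2]
    obtain ⟨t, ht0, ht1, ht⟩ := small_t ((c i * K) ^ (1 / ν i)) ((c0 * K) ^ (1 / ν0)) (u * x i)
      (1 / ν i) (1 / ν0) (one_lt _ (hν i)) (one_lt _ hν0) hux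
    have htu : κE i (t * u) ≠ ⊤ := by
      apply hfin
      rw [abs_mul, abs_of_pos ht0]
      have := abs_nonneg u
      nlinarith
    have hk : (κE i (t * u)).toReal ≤ t * K := by
      have h1 := hκconv i t (1 - t) u 0 ht0.le (by linarith) (by ring)
      rw [hκ0, mul_zero, mul_zero, add_zero, add_zero,
        ← EReal.coe_toReal htu (hκbot _ _), ← EReal.coe_toReal (hfin u hu) (hκbot _ _),
        ← EReal.coe_mul, EReal.coe_le_coe_iff] at h1
      exact h1.trans (mul_le_mul_of_nonneg_left (le_max_left _ _) ht0.le)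
    let θ : Fin h → ℝ := Pi.single i (t * u)
    have hθi : θ i = t * u := Pi.single_eq_same _ _
    have hθj : ∀ j, j ≠ i → θ j = 0 := fun j hj => Pi.single_eq_of_ne hj _
    have hne : ∀ j, κE j (θ j) ≠ ⊤ := by
      intro j
      by_cases hj : j = i
      · subst hj
        rw [hθi]
        exact htu
      · rw [hθj j hj, hκ0]
        exact EReal.zero_ne_top
    have hs1 : (∑ j, θ j * x j) = t * u * x i := by
      rw [Finset.sum_eq_single i, hθi]
      · intro j _ hj
        rw [hθj j hj, zero_mul]
      · simp
    have hs2 : (∑ j, (κE j (θ j)).toReal) = (κE i (t * u)).toReal := by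
      rw [Finset.sum_eq_single i, hθi]
      · intro j _ hj
        rw [hθj j hj, hκ0]
        rfl
      · simp
    have hs3 : (∑ j, if 0 ≤ (κE j (θ j)).toReal
        then (c j * (κE j (θ j)).toReal) ^ (1 / ν j) else 0) =
        if 0 ≤ (κE i (t * u)).toReal
          then (c i * (κE i (t * u)).toReal) ^ (1 / ν i) else 0 := by
      rw [Finset.sum_eq_single i, hθi]
      · intro j _ hj
        rw [hθj j hj, hκ0, EReal.toReal_zero, mul_zero,
          Real.zero_rpow (by have := one_lt _ (hν j); linarith), ite_self]
      · simp
    have hPsi : PsiStar ν0 ν c0 c κE θ < ENNReal.ofReal (t * u * x i) := by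
      unfold PsiStar
      rw [if_pos hne, hs2]
      have hpos : 0 < t * u * x i := by
        rw [mul_assoc]
        positivity
      rw [ENNReal.ofReal_lt_ofReal_iff hpos]
      have a1 := term_le (c i) _ K t (1 / ν i) (hc i) hK ht0.le
        (by linarith [one_lt _ (hν i)]) hk
      have a2 := term_le c0 _ K t (1 / ν0) hc0 hK ht0.le (by linarith [one_lt _ hν0]) hk
      have a3 := hs3.trans_le a1
      refine lt_of_le_of_lt (add_le_add ?_ a2) (lt_of_lt_of_eq ht (by ring))
      convert a3
    have hterm : (0 : EReal) < ((∑ j, θ j * x j : ℝ) : EReal) -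
        (PsiStar ν0 ν c0 c κE θ : EReal) := by
      rw [hs1]
      have hfinP : PsiStar ν0 ν c0 c κE θ ≠ ⊤ := (hPsi.trans ENNReal.ofReal_lt_top).ne
      have h2 := (ENNReal.lt_ofReal_iff_toReal_lt hfinP).1 hPsi
      have h3 : (PsiStar ν0 ν c0 c κE θ : EReal) =
          (((PsiStar ν0 ν c0 c κE θ).toReal : ℝ) : EReal) := by
        rw [← EReal.toReal_coe_ennreal, EReal.coe_toReal (by simpa using hfinP) (by simp)]
      rw [h3, ← EReal.coe_sub]
      exact EReal.coe_pos.2 (sub_pos.2 h2)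
    have hsup := hterm.trans_le (le_iSup (fun θ : Fin h → ℝ =>
      (((∑ i, θ i * x i : ℝ) : EReal) - (PsiStar ν0 ν c0 c κE θ : EReal))) θ)
    unfold legendreENN erealToENNReal at hL
    split_ifs at hL with htop
    · exact ENNReal.top_ne_zero hL
    · rw [ENNReal.ofReal_eq_zero] at hL
      exact absurd hL (not_le.2 (EReal.toReal_pos hsup htop))
  · rintro rfl
    have hsup : (⨆ θ : Fin h → ℝ, (((∑ i, θ i * (0 : Fin h → ℝ) i : ℝ) : EReal) -
        (PsiStar ν0 ν c0 c κE θ : EReal))) ≤ 0 := by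
      refine iSup_le fun θ => ?_
      simpa using EReal.coe_ennreal_nonneg _
    unfold legendreENN erealToENNReal
    rw [if_neg (hsup.trans_lt EReal.zero_lt_top).ne, ENNReal.ofReal_eq_zero]
    exact EReal.toReal_nonpos hsup
end

section
/- Let ν ∈ (0,1) and a ≤ 0, and let E_ν denote the Mittag-Leffler function. Then lim_{t→∞} (1/t) log E_ν(a t^ν) = 0. -/
open Filter

/-- The Mittag-Leffler function `E_α(x) = Σ_k x^k / Γ(α k + 1)`. -/
noncomputable def mittagLeffler (α x : ℝ) : ℝ := ∑' k : ℕ, x ^ k / Real.Gamma (α * k + 1)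

open MeasureTheory Set Topology

lemma aux_beta {p q : ℝ} (hp : 0 < p) (hq : 0 < q) :
    IntervalIntegrable (fun s : ℝ => s ^ (p - 1) * (1 - s) ^ (q - 1)) volume 0 1 ∧
    ∫ s in (0 : ℝ)..1, s ^ (p - 1) * (1 - s) ^ (q - 1) =
      Real.Gamma p * Real.Gamma q / Real.Gamma (p + q) := by
  have hc := Complex.betaIntegral_convergent (u := (p : ℂ)) (v := (q : ℂ)) (by simpa) (by simpa)
  have hpt : ∀ s ∈ Set.uIcc (0 : ℝ) 1, (s : ℂ) ^ ((p : ℂ) - 1) * (1 - (s : ℂ)) ^ ((q : ℂ) - 1)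
      = ((s ^ (p - 1) * (1 - s) ^ (q - 1) : ℝ) : ℂ) := by
    intro s hs
    rw [Set.uIcc_of_le zero_le_one] at hs
    rw [Complex.ofReal_mul, Complex.ofReal_cpow hs.1, Complex.ofReal_cpow (by linarith [hs.2])]
    push_cast
    rfl
  have hB := Complex.betaIntegral_eq_Gamma_mul_div (p : ℂ) (q : ℂ) (by simpa) (by simpa)
  rw [Complex.betaIntegral, intervalIntegral.integral_congr hpt,
    intervalIntegral.integral_ofReal, Complex.Gamma_ofReal, Complex.Gamma_ofReal,
    ← Complex.ofReal_add, Complex.Gamma_ofReal] at hB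
  refine ⟨?_, by exact_mod_cast hB⟩
  rw [intervalIntegrable_iff] at hc ⊢
  refine (hc.re).congr ?_
  filter_upwards [ae_restrict_mem measurableSet_uIoc] with s hs
  rw [hpt s (Set.uIoc_subset_uIcc hs)]
  simp

lemma aux_bound {p : ℝ} (hp : 0 < p) {s : ℝ} (h0 : 0 ≤ s) (h1 : s ≤ 1) :
    0 ≤ 1 - s ^ p ∧ 1 - s ^ p ≤ max 1 p * (1 - s) := by
  refine ⟨by linarith [Real.rpow_le_one h0 h1 hp.le], ?_⟩
  rcases le_total 1 p with h | h
  · have := one_add_mul_self_le_rpow_one_add (s := s - 1) (by linarith) h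
    rw [max_eq_right h]
    have e : 1 + (s - 1) = s := by ring
    rw [e] at this
    linarith
  · rw [max_eq_left h]
    have := Real.rpow_le_rpow_of_exponent_ge' h0 h1 hp.le h
    rw [Real.rpow_one] at this
    linarith

lemma aux_I {ν p : ℝ} (h0 : 0 < ν) (h1 : ν < 1) (hp : 0 < p) :
    IntervalIntegrable (fun s : ℝ => (1 - s ^ p) * (1 - s) ^ (-ν - 1)) volume 0 1 ∧
    ∫ s in (0 : ℝ)..1, (1 - s ^ p) * (1 - s) ^ (-ν - 1) =
      (Real.Gamma (p + 1) * Real.Gamma (1 - ν) / Real.Gamma (p + 1 - ν) - 1) / ν := by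
  obtain ⟨hbi, hbv⟩ := aux_beta hp (show 0 < 1 - ν by linarith)
  obtain ⟨hci, -⟩ := aux_beta one_pos (show 0 < 1 - ν by linarith)
  have hint : IntervalIntegrable (fun s : ℝ => (1 - s ^ p) * (1 - s) ^ (-ν - 1)) volume 0 1 := by
    refine (hci.const_mul (max 1 p)).mono_fun ?_ ?_
    · exact (by fun_prop : Measurable
        (fun s : ℝ => (1 - s ^ p) * (1 - s) ^ (-ν - 1))).aestronglyMeasurable
    · filter_upwards [ae_restrict_mem measurableSet_uIoc] with s hs
      rw [Set.uIoc_of_le zero_le_one] at hs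
      obtain ⟨b0, b1⟩ := aux_bound hp hs.1.le hs.2
      rcases hs.2.eq_or_lt with rfl | hlt
      · simp; positivity
      have hpos : 0 < 1 - s := by linarith
      rw [Real.norm_of_nonneg (by positivity), sub_self, Real.rpow_zero, one_mul,
        Real.norm_of_nonneg (by positivity)]
      calc (1 - s ^ p) * (1 - s) ^ (-ν - 1) ≤ (max 1 p * (1 - s)) * (1 - s) ^ (-ν - 1) := by gcongr
        _ = max 1 p * ((1 - s) ^ (1 : ℝ) * (1 - s) ^ (-ν - 1)) := by rw [Real.rpow_one]; ring
        _ = _ := by rw [← Real.rpow_add hpos]; ring_nf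
  refine ⟨hint, ?_⟩
  have hF := intervalIntegral.integral_eq_sub_of_hasDerivAt_of_tendsto (a := (0 : ℝ)) (b := 1)
    (f := fun s : ℝ => (1 - s ^ p) * (1 - s) ^ (-ν))
    (f' := fun s : ℝ => ν * ((1 - s ^ p) * (1 - s) ^ (-ν - 1))
      - p * (s ^ (p - 1) * (1 - s) ^ (1 - ν - 1))) (fa := 1) (fb := 0) one_pos ?_ ?_ ?_ ?_
  · rw [intervalIntegral.integral_sub (hint.const_mul _) (hbi.const_mul _),
      intervalIntegral.integral_const_mul, intervalIntegral.integral_const_mul, hbv] at hF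
    rw [Real.Gamma_add_one hp.ne', show p + 1 - ν = p + (1 - ν) by ring, eq_div_iff h0.ne']
    have e : p * Real.Gamma p * Real.Gamma (1 - ν) / Real.Gamma (p + (1 - ν)) =
      p * (Real.Gamma p * Real.Gamma (1 - ν) / Real.Gamma (p + (1 - ν))) := by ring
    rw [e]
    linarith
  · intro s hs
    have a1 := (Real.hasDerivAt_rpow_const (x := s) (p := p) (Or.inl hs.1.ne')).const_sub 1
    have a2 := ((hasDerivAt_id s).const_sub 1).rpow_const (p := -ν)
      (Or.inl (by simp; linarith [hs.2]))
    refine (a1.mul a2).congr_deriv ?_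
    simp only [id]
    rw [show (1 - ν - 1) = -ν by ring]
    ring
  · exact (hint.const_mul _).sub (hbi.const_mul _)
  · have : ContinuousAt (fun s : ℝ => (1 - s ^ p) * (1 - s) ^ (-ν)) 0 := by
      refine ContinuousAt.mul ?_ ?_
      · exact continuousAt_const.sub (Real.continuousAt_rpow_const _ _ (Or.inr hp.le))
      · exact (continuousAt_const.sub continuousAt_id).rpow_const (Or.inl (by simp))
    have := this.tendsto
    simp [Real.zero_rpow hp.ne'] at this
    exact this.mono_left nhdsWithin_le_nhds
  · have hlim : Tendsto (fun s : ℝ => max 1 p * (1 - s) ^ (1 - ν)) (𝓝[<] 1) (𝓝 0) := by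
      have : ContinuousAt (fun s : ℝ => max 1 p * (1 - s) ^ (1 - ν)) 1 :=
        continuousAt_const.mul ((continuousAt_const.sub continuousAt_id).rpow_const
          (Or.inr (by linarith)))
      have := this.tendsto
      simp only [sub_self, Real.zero_rpow (show 1 - ν ≠ 0 by linarith), mul_zero] at this
      exact this.mono_left nhdsWithin_le_nhds
    refine tendsto_of_tendsto_of_tendsto_of_le_of_le' tendsto_const_nhds hlim ?_ ?_
    · filter_upwards [Ioo_mem_nhdsLT (show (0 : ℝ) < 1 by norm_num)] with s hs
      exact mul_nonneg (aux_bound hp hs.1.le hs.2.le).1 (Real.rpow_nonneg (by linarith [hs.2]) _)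
    · filter_upwards [Ioo_mem_nhdsLT (show (0 : ℝ) < 1 by norm_num)] with s hs
      have hpos : 0 < 1 - s := by linarith [hs.2]
      calc (1 - s ^ p) * (1 - s) ^ (-ν) ≤ (max 1 p * (1 - s)) * (1 - s) ^ (-ν) := by
            gcongr; exact (aux_bound hp hs.1.le hs.2.le).2
        _ = max 1 p * ((1 - s) ^ (1 : ℝ) * (1 - s) ^ (-ν)) := by rw [Real.rpow_one]; ring
        _ = _ := by rw [← Real.rpow_add hpos]; ring_nf

lemma aux_I' {ν p : ℝ} (h0 : 0 < ν) (h1 : ν < 1) (hp : 0 ≤ p) :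
    IntervalIntegrable (fun s : ℝ => (1 - s ^ p) * (1 - s) ^ (-ν - 1)) volume 0 1 ∧
    ∫ s in (0 : ℝ)..1, (1 - s ^ p) * (1 - s) ^ (-ν - 1) =
      (Real.Gamma (p + 1) * Real.Gamma (1 - ν) / Real.Gamma (p + 1 - ν) - 1) / ν := by
  rcases hp.eq_or_lt with rfl | hp
  · have : Real.Gamma (1 - ν) ≠ 0 := (Real.Gamma_pos_of_pos (by linarith)).ne'
    simp [this]
  · exact aux_I h0 h1 hp

lemma aux_summable {ν : ℝ} (h0 : 0 < ν) (h1 : ν < 1) (x : ℝ) :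
    Summable (fun k : ℕ => x ^ k / Real.Gamma (ν * k + 1)) := by
  by_cases hx : x = 0
  · subst hx
    refine summable_of_ne_finset_zero (s := {0}) ?_
    intro b hb
    simp at hb
    simp [hb]
  have hG : ∀ k : ℕ, 0 < Real.Gamma (ν * k + 1) := fun k => Real.Gamma_pos_of_pos (by positivity)
  refine summable_of_ratio_test_tendsto_lt_one (l := 0) one_pos
    (Eventually.of_forall fun k => div_ne_zero (pow_ne_zero _ hx) (hG k).ne') ?_
  have hlim : Tendsto (fun k : ℕ => |x| * (ν * k + ν) ^ (-ν)) atTop (𝓝 0) := by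
    have : Tendsto (fun k : ℕ => ν * (k : ℝ) + ν) atTop atTop :=
      tendsto_atTop_add_const_right _ _ (tendsto_natCast_atTop_atTop.const_mul_atTop h0)
    simpa using ((tendsto_rpow_neg_atTop h0).comp this).const_mul |x|
  refine squeeze_zero (fun k => by positivity) (fun k => ?_) hlim
  have hy : 0 < ν * (k : ℝ) + ν := by positivity
  have key : Real.Gamma (ν * k + 1) ≤ Real.Gamma (ν * k + ν + 1) * (ν * k + ν) ^ (-ν) := by
    have := Real.Gamma_mul_add_mul_le_rpow_Gamma_mul_rpow_Gamma hy
      (show 0 < ν * (k : ℝ) + ν + 1 by positivity) h0 (show 0 < 1 - ν by linarith) (by ring)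
    have e : ν * (ν * (k : ℝ) + ν) + (1 - ν) * (ν * k + ν + 1) = ν * k + 1 := by ring
    rw [e] at this
    refine this.trans_eq ?_
    have g := Real.Gamma_pos_of_pos hy
    rw [Real.Gamma_add_one hy.ne', Real.mul_rpow hy.le g.le, Real.rpow_sub hy, Real.rpow_sub g,
      Real.rpow_neg hy.le, Real.rpow_one, Real.rpow_one]
    have := Real.rpow_pos_of_pos g ν
    have := Real.rpow_pos_of_pos hy ν
    field_simp
  have hG1 := hG (k + 1)
  rw [norm_div, norm_div, norm_pow, norm_pow, Real.norm_of_nonneg (hG k).le,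
    Real.norm_of_nonneg hG1.le, Real.norm_eq_abs]
  have e2 : ν * ((k + 1 : ℕ) : ℝ) + 1 = ν * k + ν + 1 := by push_cast; ring
  rw [e2] at hG1 ⊢
  have hxp : 0 < |x| := abs_pos.mpr hx
  have := hG k
  calc |x| ^ (k + 1) / Real.Gamma (ν * k + ν + 1) / (|x| ^ k / Real.Gamma (ν * k + 1))
      = |x| * (Real.Gamma (ν * k + 1) / Real.Gamma (ν * k + ν + 1)) := by
        field_simp
        ring
    _ ≤ _ := by
        gcongr
        rw [div_le_iff₀ hG1]
        linarith

lemma aux_cont {ν : ℝ} (h0 : 0 < ν) (h1 : ν < 1) (X : ℝ) :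
    ContinuousOn (fun x => mittagLeffler ν (-x)) (Icc 0 X) := by
  unfold mittagLeffler
  refine continuousOn_tsum (u := fun k : ℕ => X ^ k / Real.Gamma (ν * k + 1))
    (fun k => by fun_prop) (aux_summable h0 h1 X) ?_
  intro k x hx
  have hG : 0 < Real.Gamma (ν * k + 1) := Real.Gamma_pos_of_pos (by positivity)
  rw [norm_div, norm_pow, norm_neg, Real.norm_of_nonneg hx.1, Real.norm_of_nonneg hG.le]
  gcongr
  · exact hx.1
  · exact hx.2

lemma aux_identity {ν x : ℝ} (h0 : 0 < ν) (h1 : ν < 1) (hx : 0 ≤ x) :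
    mittagLeffler ν (-x) * (1 + x * Real.Gamma (1 - ν)) = 1 -
      ν * ∫ s in (0 : ℝ)..1,
        (mittagLeffler ν (-x) - mittagLeffler ν (-(x * s ^ ν))) * (1 - s) ^ (-ν - 1) := by
  have hG : ∀ k : ℕ, 0 < Real.Gamma (ν * k + 1) := fun k => Real.Gamma_pos_of_pos (by positivity)
  have hI := fun k : ℕ => aux_I' (p := ν * k) h0 h1 (by positivity)
  have hG1 : 0 < Real.Gamma (1 - ν) := Real.Gamma_pos_of_pos (by linarith)
  -- shifted series
  have hshift : ∀ y : ℝ, HasSum (fun k : ℕ => y ^ k / Real.Gamma (ν * k + 1 - ν))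
      (1 / Real.Gamma (1 - ν) + y * mittagLeffler ν y) := by
    intro y
    have h := ((aux_summable h0 h1 y).hasSum).mul_left y
    rw [← hasSum_nat_add_iff' 1]
    simp only [Finset.sum_range_one, pow_zero, Nat.cast_zero, mul_zero, zero_add]
    rw [add_sub_cancel_left]
    refine h.congr_fun fun k => ?_
    · rw [show ν * ((k + 1 : ℕ) : ℝ) + 1 - ν = ν * k + 1 by push_cast; ring]
      ring
  have hval : ∀ y : ℝ, HasSum (fun k : ℕ => y ^ k / Real.Gamma (ν * k + 1) *
      ((Real.Gamma (ν * k + 1) * Real.Gamma (1 - ν) / Real.Gamma (ν * k + 1 - ν) - 1) / ν))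
      ((1 + y * Real.Gamma (1 - ν) * mittagLeffler ν y - mittagLeffler ν y) / ν) := by
    intro y
    have h := (((hshift y).mul_left (Real.Gamma (1 - ν))).sub
      ((aux_summable h0 h1 y).hasSum)).div_const ν
    have e : (1 + y * Real.Gamma (1 - ν) * mittagLeffler ν y - mittagLeffler ν y) / ν =
        (Real.Gamma (1 - ν) * (1 / Real.Gamma (1 - ν) + y * mittagLeffler ν y) -
          mittagLeffler ν y) / ν := by
      field_simp
    rw [e]
    refine h.congr_fun fun k => ?_
    have := (hG k).ne'
    field_simp
  have hmain := hasSum_integral_of_summable_integral_norm (μ := volume.restrict (Ioc (0 : ℝ) 1))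
    (F := fun (k : ℕ) (s : ℝ) => (-x) ^ k / Real.Gamma (ν * k + 1) *
      ((1 - s ^ (ν * k)) * (1 - s) ^ (-ν - 1))) ?_ ?_
  · have e1 : ∀ k : ℕ, ∫ s in Ioc (0 : ℝ) 1, (-x) ^ k / Real.Gamma (ν * k + 1) *
      ((1 - s ^ (ν * k)) * (1 - s) ^ (-ν - 1)) = (-x) ^ k / Real.Gamma (ν * k + 1) *
      ((Real.Gamma (ν * k + 1) * Real.Gamma (1 - ν) / Real.Gamma (ν * k + 1 - ν) - 1) / ν) := by
      intro k
      rw [integral_const_mul, ← (hI k).2, intervalIntegral.integral_of_le zero_le_one]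
    simp only [e1] at hmain
    have h2 := hmain.unique (hval (-x))
    have e3 : ∫ s in Ioc (0 : ℝ) 1, ∑' k : ℕ, (-x) ^ k / Real.Gamma (ν * k + 1) *
      ((1 - s ^ (ν * k)) * (1 - s) ^ (-ν - 1)) = ∫ s in (0 : ℝ)..1,
        (mittagLeffler ν (-x) - mittagLeffler ν (-(x * s ^ ν))) * (1 - s) ^ (-ν - 1) := by
      rw [intervalIntegral.integral_of_le zero_le_one]
      refine setIntegral_congr_fun measurableSet_Ioc ?_
      intro s hs
      simp only [mittagLeffler]
      rw [← (aux_summable h0 h1 _).tsum_sub (aux_summable h0 h1 _), ← tsum_mul_right]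
      congr 1
      ext k
      rw [Real.rpow_mul hs.1.le, Real.rpow_natCast, neg_mul_eq_neg_mul, mul_pow]
      ring
    rw [← e3, h2]
    field_simp
    ring
  · intro k
    have := (hI k).1
    rw [intervalIntegrable_iff_integrableOn_Ioc_of_le zero_le_one] at this
    exact this.const_mul _
  · refine (hval x).summable.congr ?_
    intro k
    rw [← (hI k).2, intervalIntegral.integral_of_le zero_le_one, ← integral_const_mul]
    refine setIntegral_congr_fun measurableSet_Ioc ?_
    intro s hs
    have a : 0 ≤ 1 - s ^ (ν * k) := by
      linarith [Real.rpow_le_one hs.1.le hs.2 (show 0 ≤ ν * k by positivity)]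
    have b : 0 ≤ (1 - s) ^ (-ν - 1) := Real.rpow_nonneg (by linarith [hs.2]) _
    have := hG k
    simp only [norm_mul, norm_div, norm_pow, norm_neg]
    rw [Real.norm_of_nonneg a, Real.norm_of_nonneg b, Real.norm_of_nonneg hx,
      Real.norm_of_nonneg this.le]

lemma aux_bounds {ν X : ℝ} (h0 : 0 < ν) (h1 : ν < 1) (hX : 0 ≤ X) :
    1 / (1 + X * Real.Gamma (1 - ν)) ≤ mittagLeffler ν (-X) ∧ mittagLeffler ν (-X) ≤ 1 := by
  have hG1 : 0 < Real.Gamma (1 - ν) := Real.Gamma_pos_of_pos (by linarith)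
  have hmem : ∀ x ∈ Icc 0 X, ∀ s ∈ Icc (0 : ℝ) 1, x * s ^ ν ∈ Icc 0 X := by
    intro x hx s hs
    have a := Real.rpow_nonneg hs.1 ν
    have b := Real.rpow_le_one hs.1 hs.2 h0.le
    exact ⟨mul_nonneg hx.1 a, (mul_le_of_le_one_right hx.1 b).trans hx.2⟩
  have hne : (Icc 0 X).Nonempty := ⟨0, by simpa⟩
  constructor
  · obtain ⟨x, hx, hmin⟩ := isCompact_Icc.exists_isMinOn hne (aux_cont h0 h1 X)
    have hid := aux_identity h0 h1 hx.1
    have hneg : 0 ≤ ∫ s in (0 : ℝ)..1,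
        -((mittagLeffler ν (-x) - mittagLeffler ν (-(x * s ^ ν))) * (1 - s) ^ (-ν - 1)) := by
      refine intervalIntegral.integral_nonneg zero_le_one ?_
      intro s hs
      have b : 0 ≤ (1 - s) ^ (-ν - 1) := Real.rpow_nonneg (by linarith [hs.2]) _
      have c : mittagLeffler ν (-x) ≤ mittagLeffler ν (-(x * s ^ ν)) := hmin (hmem x hx s hs)
      rw [← neg_mul]
      exact mul_nonneg (by linarith) b
    rw [intervalIntegral.integral_neg] at hneg
    have hx0 := hx.1
    have : 1 / (1 + x * Real.Gamma (1 - ν)) ≤ mittagLeffler ν (-x) := by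
      rw [div_le_iff₀ (by positivity), hid]
      nlinarith
    refine le_trans ?_ (this.trans (hmin (show X ∈ Icc 0 X from ⟨hX, le_rfl⟩)))
    gcongr
    exact hx.2
  · obtain ⟨x, hx, hmax⟩ := isCompact_Icc.exists_isMaxOn hne (aux_cont h0 h1 X)
    have hid := aux_identity h0 h1 hx.1
    have hpos : 0 ≤ ∫ s in (0 : ℝ)..1,
        ((mittagLeffler ν (-x) - mittagLeffler ν (-(x * s ^ ν))) * (1 - s) ^ (-ν - 1)) := by
      refine intervalIntegral.integral_nonneg zero_le_one ?_
      intro s hs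
      have b : 0 ≤ (1 - s) ^ (-ν - 1) := Real.rpow_nonneg (by linarith [hs.2]) _
      have c : mittagLeffler ν (-(x * s ^ ν)) ≤ mittagLeffler ν (-x) := hmax (hmem x hx s hs)
      exact mul_nonneg (by linarith) b
    have hx0 := hx.1
    have : mittagLeffler ν (-x) ≤ 1 := by
      have h3 : mittagLeffler ν (-x) * (1 + x * Real.Gamma (1 - ν)) ≤ 1 := by
        rw [hid]; nlinarith
      by_contra! hc
      have : 0 ≤ x * Real.Gamma (1 - ν) := by positivity
      nlinarith
    exact (hmax (show X ∈ Icc 0 X from ⟨hX, le_rfl⟩)).trans this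

/-- For `ν ∈ (0,1)` and `a ≤ 0`, `lim_{t→∞} (1/t) log E_ν(a t^ν) = 0`. -/
theorem stmt_18 (ν a : ℝ) (hν : ν ∈ Set.Ioo (0 : ℝ) 1) (ha : a ≤ 0) :
    Filter.Tendsto (fun t : ℝ => (1 / t) * Real.log (mittagLeffler ν (a * t ^ ν)))
      Filter.atTop (nhds 0) := by
  obtain ⟨h0, h1⟩ := hν
  have hG1 : 0 < Real.Gamma (1 - ν) := Real.Gamma_pos_of_pos (by linarith)
  have hlim : Tendsto (fun t : ℝ => -((-a * Real.Gamma (1 - ν)) * t ^ (-(1 - ν)))) atTop (𝓝 0) := by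
    simpa using ((tendsto_rpow_neg_atTop (show 0 < 1 - ν by linarith)).const_mul
      (-a * Real.Gamma (1 - ν))).neg
  refine tendsto_of_tendsto_of_tendsto_of_le_of_le' hlim tendsto_const_nhds ?_ ?_
  · filter_upwards [eventually_gt_atTop 0] with t ht
    have hX : 0 ≤ -a * t ^ ν := mul_nonneg (by linarith) (by positivity)
    obtain ⟨b1, -⟩ := aux_bounds h0 h1 hX
    rw [show -(-a * t ^ ν) = a * t ^ ν by ring] at b1
    have hpos : 0 < 1 + -a * t ^ ν * Real.Gamma (1 - ν) := by positivity
    have hl := Real.log_le_log (by positivity) b1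
    rw [one_div, Real.log_inv] at hl
    have hl2 := Real.log_le_sub_one_of_pos hpos
    have hl3 : -(-a * t ^ ν * Real.Gamma (1 - ν)) ≤ Real.log (mittagLeffler ν (a * t ^ ν)) := by
      linarith
    calc -((-a * Real.Gamma (1 - ν)) * t ^ (-(1 - ν)))
        = 1 / t * -(-a * t ^ ν * Real.Gamma (1 - ν)) := by
          rw [show -(1 - ν) = ν - 1 by ring, Real.rpow_sub ht, Real.rpow_one]; ring
      _ ≤ _ := by gcongr
  · filter_upwards [eventually_gt_atTop 0] with t ht
    have hX : 0 ≤ -a * t ^ ν := mul_nonneg (by linarith) (by positivity)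
    obtain ⟨b1, b2⟩ := aux_bounds h0 h1 hX
    rw [show -(-a * t ^ ν) = a * t ^ ν by ring] at b1 b2
    have hpos : 0 < 1 + -a * t ^ ν * Real.Gamma (1 - ν) := by positivity
    have hp : 0 ≤ mittagLeffler ν (a * t ^ ν) := le_trans (by positivity) b1
    exact mul_nonpos_of_nonneg_of_nonpos (by positivity) (Real.log_nonpos hp b2)
end

section
/- Let ν ∈ (0,1) and let E_ν denote the Mittag-Leffler function. Let x, g : (0,∞) → ℝ be functions with x_t → ∞ and g_t → y ∈ ℝ as t → ∞. Then lim_{t→∞} (1/x_t) log E_ν(g_t · x_t^ν) = (max(y,0))^{1/ν} (with the convention 0^{1/ν} = 0). -/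
open Filter

/-- Coefficients of `(1-X)^(-c-1)`. -/
noncomputable def mlB (c : ℝ) : ℕ → ℝ
  | 0 => 1
  | n + 1 => mlB c n * (1 + c / (n + 1))

lemma mlB_succ (c : ℝ) (n : ℕ) : mlB c (n + 1) = mlB c n * (1 + c / (n + 1)) := rfl

lemma mlB_succ' (c : ℝ) (n : ℕ) : ((n : ℝ) + 1) * mlB c (n + 1) = ((n : ℝ) + 1 + c) * mlB c n := by
  rw [mlB_succ]
  have : (n : ℝ) + 1 ≠ 0 := by positivity
  field_simp

lemma mlB_pos {c : ℝ} (hc : -1 < c) (n : ℕ) : 0 < mlB c n := by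
  induction n with
  | zero => simp [mlB]
  | succ n ih =>
    rw [mlB_succ]
    apply mul_pos ih
    have h : (0 : ℝ) < n + 1 := by positivity
    have h0 : (0 : ℝ) ≤ n := by positivity
    rw [show 1 + c / ((n : ℝ) + 1) = (n + 1 + c) / (n + 1) by field_simp]
    apply div_pos _ h
    linarith

lemma mlB_zero (n : ℕ) : mlB 0 n = 1 := by
  induction n with
  | zero => simp [mlB]
  | succ n ih => rw [mlB_succ, ih]; simp

lemma mlB_antitone {c : ℝ} (hc : -1 < c) (hc0 : c ≤ 0) : Antitone (mlB c) := by
  apply antitone_nat_of_succ_le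
  intro n
  rw [mlB_succ]
  have := mlB_pos hc n
  have h2 : c / ((n : ℝ) + 1) ≤ 0 := div_nonpos_of_nonpos_of_nonneg hc0 (by positivity)
  nlinarith

/-- for `-2 < c < -1` the coefficients of positive index are negative -/
lemma mlB_neg {c : ℝ} (hc : -2 < c) (hc0 : c < -1) (n : ℕ) : mlB c (n + 1) < 0 := by
  induction n with
  | zero => simp [mlB]; linarith
  | succ n ih =>
    rw [mlB_succ]
    apply mul_neg_of_neg_of_pos ih
    push_cast
    have h : (0 : ℝ) < n + 1 + 1 := by positivity
    have h0 : (0 : ℝ) ≤ n := by positivity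
    rw [show 1 + c / ((n : ℝ) + 1 + 1) = (n + 1 + 1 + c) / (n + 1 + 1) by field_simp]
    apply div_pos _ h
    linarith

lemma mlB_conv (a c : ℝ) (n : ℕ) :
    ∑ p ∈ Finset.HasAntidiagonal.antidiagonal n, mlB c p.1 * mlB a p.2 = mlB (a + c + 1) n := by
  induction n with
  | zero => simp [mlB]
  | succ n ih =>
    have h0 : (n : ℝ) + 1 ≠ 0 := by positivity
    apply mul_left_cancel₀ h0
    rw [mlB_succ', ← ih]
    have h1 : ((n : ℝ) + 1) * ∑ p ∈ Finset.HasAntidiagonal.antidiagonal (n + 1), mlB c p.1 * mlB a p.2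
        = ∑ p ∈ Finset.HasAntidiagonal.antidiagonal (n + 1), (p.1 : ℝ) * mlB c p.1 * mlB a p.2
        + ∑ p ∈ Finset.HasAntidiagonal.antidiagonal (n + 1), mlB c p.1 * ((p.2 : ℝ) * mlB a p.2) := by
      rw [Finset.mul_sum, ← Finset.sum_add_distrib]
      apply Finset.sum_congr rfl
      intro p hp
      have : (p.1 : ℝ) + p.2 = n + 1 := by
        have := Finset.HasAntidiagonal.mem_antidiagonal.1 hp
        exact_mod_cast this
      rw [← this]; ring
    rw [h1, Finset.Nat.sum_antidiagonal_succ, Finset.Nat.sum_antidiagonal_succ']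
    simp only [Nat.cast_zero, zero_mul, mul_zero, zero_add, Nat.cast_add, Nat.cast_one, mlB_succ']
    rw [Finset.mul_sum, ← Finset.sum_add_distrib]
    apply Finset.sum_congr rfl
    intro p hp
    have : (p.1 : ℝ) + p.2 = n := by
      have := Finset.HasAntidiagonal.mem_antidiagonal.1 hp
      exact_mod_cast this
    rw [← this]; ring

lemma mlB_le_pow {a : ℝ} (ha : 0 ≤ a) (n : ℕ) : mlB a n ≤ (1 + a) ^ n := by
  induction n with
  | zero => simp [mlB]
  | succ n ih =>
    rw [mlB_succ, pow_succ]
    have h1 : a / ((n : ℝ) + 1) ≤ a := by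
      apply div_le_self ha
      have : (0 : ℝ) ≤ n := by positivity
      linarith
    have h2 : 0 ≤ a / ((n : ℝ) + 1) := by positivity
    apply mul_le_mul ih (by linarith) (by linarith) (by positivity)

lemma mlB_dom {a : ℝ} (ha : 0 ≤ a) {J : ℕ} (hJ : 1 ≤ J) {n : ℕ} (hn : J ≤ n) :
    mlB a n ≤ (1 + a) ^ J * ((n : ℝ) / J) ^ a := by
  have hJ' : (0 : ℝ) < J := by exact_mod_cast hJ
  induction n, hn using Nat.le_induction with
  | base => rw [div_self hJ'.ne', Real.one_rpow, mul_one]; exact mlB_le_pow ha J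
  | succ n hn ih =>
    have hn' : (0 : ℝ) < n := by exact_mod_cast (lt_of_lt_of_le hJ hn)
    rw [mlB_succ]
    have e : (((n + 1 : ℕ) : ℝ) / J) ^ a = ((n : ℝ) / J) ^ a * (((n : ℝ) + 1) / n) ^ a := by
      rw [← Real.mul_rpow (by positivity) (by positivity)]
      congr 1
      push_cast
      field_simp
    rw [e, ← mul_assoc]
    apply mul_le_mul ih _ (by positivity) (by positivity)
    rw [Real.rpow_def_of_pos (by positivity)]
    have h1 : 1 / ((n : ℝ) + 1) ≤ Real.log (((n : ℝ) + 1) / n) := by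
      have := Real.one_sub_inv_le_log_of_pos (x := ((n : ℝ) + 1) / n) (by positivity)
      refine le_trans (le_of_eq ?_) this
      field_simp
      ring
    have h2 := Real.add_one_le_exp (Real.log (((n : ℝ) + 1) / n) * a)
    have h3 := mul_le_mul_of_nonneg_right h1 ha
    have h4 : 1 / ((n : ℝ) + 1) * a = a / (n + 1) := by ring
    linarith

lemma mlB_prod (a : ℝ) (n : ℕ) :
    ∏ j ∈ Finset.range n, (a + 1 + (j : ℝ)) = (n.factorial : ℝ) * mlB a n := by
  induction n with
  | zero => simp [mlB]
  | succ n ih =>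
    rw [Finset.prod_range_succ, ih, Nat.factorial_succ]
    have := mlB_succ' a n
    push_cast
    linear_combination -(n.factorial : ℝ) * this

lemma mlB_tendsto {a : ℝ} (ha : -1 < a) :
    Tendsto (fun n : ℕ => mlB a n * (n : ℝ) ^ (-a)) atTop (nhds (1 / Real.Gamma (a + 1))) := by
  have hG := Real.GammaSeq_tendsto_Gamma (a + 1)
  have hpos : 0 < Real.Gamma (a + 1) := Real.Gamma_pos_of_pos (by linarith)
  have h1 : Tendsto (fun n : ℕ => (n : ℝ) / (n + (1 + a))) atTop (nhds 1) :=
    tendsto_natCast_div_add_atTop (1 + a)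
  have h2 := h1.div hG hpos.ne'
  refine h2.congr' ?_
  filter_upwards [eventually_ge_atTop 1] with n hn
  have hn' : (0 : ℝ) < n := by exact_mod_cast hn
  have hn1 : (1 : ℝ) ≤ n := by exact_mod_cast hn
  have hB := mlB_pos ha n
  have hs := mlB_succ' a n
  have hf : (0 : ℝ) < n.factorial := by positivity
  have hna : 0 < (n : ℝ) ^ a := by positivity
  have h3 : (0 : ℝ) < n + 1 + a := by linarith
  simp only [Pi.div_apply, Real.GammaSeq]
  rw [mlB_prod, Real.rpow_neg hn'.le, Real.rpow_add hn', Real.rpow_one, Nat.factorial_succ]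
  push_cast
  rw [show ((n : ℝ) + 1) * (n.factorial : ℝ) * mlB a (n + 1)
    = (n.factorial : ℝ) * (((n : ℝ) + 1) * mlB a (n + 1)) by ring, hs]
  rw [show (n : ℝ) + (1 + a) = n + 1 + a by ring]
  field_simp

lemma summable_succ_pow_geom (J : ℕ) {r : ℝ} (h0 : 0 < r) (h1 : r < 1) :
    Summable (fun k : ℕ => (1 + (k : ℝ)) ^ J * r ^ k) := by
  have h := summable_pow_mul_geometric_of_norm_lt_one J (r := r)
    (by rw [Real.norm_eq_abs, abs_of_pos h0]; exact h1)
  have h2 := ((summable_nat_add_iff 1).2 h).mul_right r⁻¹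
  refine h2.congr ?_
  intro k
  push_cast
  field_simp
  ring

/-- discrete Mittag-Leffler -/
noncomputable def mlb (ν l : ℝ) (n : ℕ) : ℝ := ∑' k : ℕ, (-l) ^ k * mlB (ν * k) n

lemma mlb_summable {ν l : ℝ} (hν : ν ∈ Set.Ioo (0 : ℝ) 1) (h0 : 0 < l) (h1 : l < 1) (n : ℕ) :
    Summable (fun k : ℕ => (-l) ^ k * mlB (ν * k) n) := by
  obtain ⟨hν0, hν1⟩ := hν
  refine Summable.of_norm_bounded (summable_succ_pow_geom n h0 h1) ?_
  intro k
  have hk : (0 : ℝ) ≤ k := by positivity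
  have hp := mlB_pos (c := ν * k) (by have : 0 ≤ ν * k := by positivity
                                      linarith) n
  rw [norm_mul, norm_pow, norm_neg, Real.norm_of_nonneg h0.le, Real.norm_of_nonneg hp.le, mul_comm]
  apply mul_le_mul_of_nonneg_right _ (by positivity)
  refine (mlB_le_pow (by positivity) n).trans ?_
  have : ν * k ≤ k := by nlinarith
  gcongr

lemma mlb_rec {ν l : ℝ} (hν : ν ∈ Set.Ioo (0 : ℝ) 1) (h0 : 0 < l) (h1 : l < 1) (n : ℕ) :
    ∑ p ∈ Finset.HasAntidiagonal.antidiagonal n, mlB (-ν - 1) p.1 * mlb ν l p.2 = mlB (-ν) n - l * mlb ν l n := by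
  have hs : ∀ m : ℕ, HasSum (fun k : ℕ => (-l) ^ k * mlB (ν * k) m) (mlb ν l m) :=
    fun m => (mlb_summable hν h0 h1 m).hasSum
  have e : ∀ k : ℕ, ∑ p ∈ Finset.HasAntidiagonal.antidiagonal n,
      mlB (-ν - 1) p.1 * ((-l) ^ k * mlB (ν * k) p.2) = (-l) ^ k * mlB (ν * k - ν) n := by
    intro k
    have := mlB_conv (ν * k) (-ν - 1) n
    rw [show ν * k + (-ν - 1) + 1 = ν * k - ν by ring] at this
    rw [← this, Finset.mul_sum]
    apply Finset.sum_congr rfl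
    intro p _
    ring
  have hA : HasSum (fun k : ℕ => ∑ p ∈ Finset.HasAntidiagonal.antidiagonal n,
      mlB (-ν - 1) p.1 * ((-l) ^ k * mlB (ν * k) p.2))
      (∑ p ∈ Finset.HasAntidiagonal.antidiagonal n, mlB (-ν - 1) p.1 * mlb ν l p.2) :=
    hasSum_sum (fun p _ => (hs p.2).mul_left (mlB (-ν - 1) p.1))
  have hB : HasSum (fun k : ℕ => (-l) ^ k * mlB (ν * k - ν) n)
      (∑ p ∈ Finset.HasAntidiagonal.antidiagonal n, mlB (-ν - 1) p.1 * mlb ν l p.2) :=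
    (funext e) ▸ hA
  have e2 : ∀ k : ℕ, -l * ((-l) ^ k * mlB (ν * k) n)
      = (-l) ^ (k + 1) * mlB (ν * ((k + 1 : ℕ) : ℝ) - ν) n := by
    intro k
    have h : ν * ((k + 1 : ℕ) : ℝ) - ν = ν * k := by push_cast; ring
    rw [h, pow_succ]
    ring
  have hC := (hs n).mul_left (-l)
  rw [funext e2] at hC
  have hD := (hasSum_nat_add_iff (f := fun k : ℕ => (-l) ^ k * mlB (ν * k - ν) n) 1).1 hC
  have hE := hB.unique hD
  rw [hE, Finset.sum_range_one, pow_zero, Nat.cast_zero, mul_zero, zero_sub]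
  ring

lemma mlb_bounds {ν l : ℝ} (hν : ν ∈ Set.Ioo (0 : ℝ) 1) (h0 : 0 < l) (h1 : l < 1) (n : ℕ) :
    ∀ m ≤ n, mlB (-ν) n / (mlB (-ν) n + l) ≤ mlb ν l m ∧ mlb ν l m ≤ 1 := by
  intro m
  have hq := mlB_pos (c := -ν) (by linarith [hν.2]) n
  set A := mlB (-ν) n / (mlB (-ν) n + l) with hA
  have hA1 : A * (mlB (-ν) n + l) = mlB (-ν) n := by
    rw [hA]; field_simp
  have hA2 : A ≤ 1 := by
    rw [hA, div_le_one (by positivity)]; linarith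
  induction m using Nat.strong_induction_on with
  | _ m ih =>
    intro hm
    have hqm := mlB_antitone (c := -ν) (by linarith [hν.2]) (by linarith [hν.1]) hm
    have hr := mlb_rec hν h0 h1 m
    have hv := mlB_conv 0 (-ν - 1) m
    rw [show 0 + (-ν - 1) + 1 = -ν by ring] at hv
    simp_rw [mlB_zero, mul_one] at hv
    have hl : (0 : ℝ) < 1 + l := by linarith
    cases m with
    | zero =>
      simp [mlB] at hr hqm
      constructor <;> nlinarith
    | succ m =>
      rw [Finset.Nat.sum_antidiagonal_succ] at hr hv
      simp only [show mlB (-ν - 1) 0 = 1 from rfl, one_mul] at hr hv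
      have hlo : ∑ p ∈ Finset.HasAntidiagonal.antidiagonal m, mlB (-ν - 1) (p.1 + 1) * mlb ν l p.2
          ≤ ∑ p ∈ Finset.HasAntidiagonal.antidiagonal m, mlB (-ν - 1) (p.1 + 1) * A := by
        apply Finset.sum_le_sum
        intro p hp
        have hp' := Finset.HasAntidiagonal.mem_antidiagonal.1 hp
        have hb := ih p.2 (by omega) (by omega)
        have hneg := mlB_neg (c := -ν - 1) (by linarith [hν.2]) (by linarith [hν.1]) p.1
        exact mul_le_mul_of_nonpos_left hb.1 hneg.le
      have hup : ∑ p ∈ Finset.HasAntidiagonal.antidiagonal m, mlB (-ν - 1) (p.1 + 1)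
          ≤ ∑ p ∈ Finset.HasAntidiagonal.antidiagonal m, mlB (-ν - 1) (p.1 + 1) * mlb ν l p.2 := by
        apply Finset.sum_le_sum
        intro p hp
        have hp' := Finset.HasAntidiagonal.mem_antidiagonal.1 hp
        have hb := ih p.2 (by omega) (by omega)
        have hneg := mlB_neg (c := -ν - 1) (by linarith [hν.2]) (by linarith [hν.1]) p.1
        nlinarith [hb.2]
      rw [← Finset.sum_mul] at hlo
      constructor
      · nlinarith
      · nlinarith

lemma mlb_tendsto {ν z : ℝ} (hν : ν ∈ Set.Ioo (0 : ℝ) 1) (hz : 0 < z) :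
    Tendsto (fun n : ℕ => mlb ν (z * (n : ℝ) ^ (-ν)) n) atTop (nhds (mittagLeffler ν (-z))) := by
  obtain ⟨hν0, hν1⟩ := hν
  have hlim : Tendsto (fun n : ℕ => z * (n : ℝ) ^ (-ν)) atTop (nhds 0) := by
    have := ((tendsto_rpow_neg_atTop hν0).comp tendsto_natCast_atTop_atTop).const_mul z
    simpa using this
  obtain ⟨J, hJ1, hJ⟩ := ((eventually_ge_atTop 1).and
    (hlim.eventually (gt_mem_nhds (zero_lt_one)))).exists
  have hJ' : (0 : ℝ) < J := by exact_mod_cast hJ1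
  have hr : 0 < z * (J : ℝ) ^ (-ν) := by positivity
  unfold mlb mittagLeffler
  refine tendsto_tsum_of_dominated_convergence (summable_succ_pow_geom J hr hJ) ?_ ?_
  · intro k
    have h := (mlB_tendsto (a := ν * k) (by have : 0 ≤ ν * k := by positivity
                                            linarith)).const_mul ((-z) ^ k)
    rw [mul_one_div] at h
    refine h.congr ?_
    intro n
    rw [show -(ν * (k : ℝ)) = (-ν) * k by ring, Real.rpow_mul (by positivity), Real.rpow_natCast,
      ← neg_mul, mul_pow]
    ring
  · filter_upwards [eventually_ge_atTop J] with n hn k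
    have hn' : (0 : ℝ) < n := by exact_mod_cast (lt_of_lt_of_le hJ1 hn)
    have hp := mlB_pos (c := ν * k) (by have : 0 ≤ ν * k := by positivity
                                        linarith) n
    have hd := mlB_dom (a := ν * k) (by positivity) hJ1 hn
    rw [norm_mul, norm_pow, norm_neg, Real.norm_of_nonneg (by positivity), Real.norm_of_nonneg hp.le]
    have hk : ν * k ≤ k := by
      have : (0 : ℝ) ≤ k := by positivity
      nlinarith
    calc (z * (n : ℝ) ^ (-ν)) ^ k * mlB (ν * k) n
        ≤ (z * (n : ℝ) ^ (-ν)) ^ k * ((1 + ν * k) ^ J * ((n : ℝ) / J) ^ (ν * k)) := by gcongr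
      _ = (1 + ν * k) ^ J * (z * (J : ℝ) ^ (-ν)) ^ k := by
          rw [Real.rpow_mul (by positivity), Real.rpow_natCast, Real.div_rpow hn'.le hJ'.le,
            Real.rpow_neg hn'.le, Real.rpow_neg hJ'.le]
          have : (0 : ℝ) < (n : ℝ) ^ ν := by positivity
          have : (0 : ℝ) < (J : ℝ) ^ ν := by positivity
          rw [mul_left_comm, ← mul_pow]
          congr 2
          field_simp
      _ ≤ _ := by gcongr

lemma ml_neg_bounds {ν z : ℝ} (hν : ν ∈ Set.Ioo (0 : ℝ) 1) (hz : 0 < z) :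
    (1 / Real.Gamma (1 - ν)) / (1 / Real.Gamma (1 - ν) + z) ≤ mittagLeffler ν (-z) ∧
      mittagLeffler ν (-z) ≤ 1 := by
  have ht := mlb_tendsto hν hz
  have hlim : Tendsto (fun n : ℕ => z * (n : ℝ) ^ (-ν)) atTop (nhds 0) := by
    have := ((tendsto_rpow_neg_atTop hν.1).comp tendsto_natCast_atTop_atTop).const_mul z
    simpa using this
  have hGp : 0 < Real.Gamma (1 - ν) := Real.Gamma_pos_of_pos (by linarith [hν.2])
  have hev := (eventually_ge_atTop 1).and (hlim.eventually (gt_mem_nhds (zero_lt_one)))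
  constructor
  · have hB := mlB_tendsto (a := -ν) (by linarith [hν.2])
    rw [show -ν + 1 = 1 - ν by ring, neg_neg] at hB
    have hl := hB.div (hB.add_const z) (by positivity)
    refine le_of_tendsto_of_tendsto hl ht ?_
    filter_upwards [hev] with n hn
    have hn' : (0 : ℝ) < n := by exact_mod_cast hn.1
    have := (mlb_bounds hν (by positivity) hn.2 n n le_rfl).1
    refine le_trans (le_of_eq ?_) this
    have hq := mlB_pos (c := -ν) (by linarith [hν.2]) n
    simp only [Pi.div_apply]
    rw [Real.rpow_neg hn'.le]
    have : (0 : ℝ) < (n : ℝ) ^ ν := by positivity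
    field_simp
  · refine le_of_tendsto ht ?_
    filter_upwards [hev] with n hn
    have hn' : (0 : ℝ) < n := by exact_mod_cast hn.1
    exact (mlb_bounds hν (by positivity) hn.2 n n le_rfl).2

lemma gamma_lower {a : ℝ} (ha : 0 ≤ a) : ((⌊a⌋₊).factorial : ℝ) / 2 ≤ Real.Gamma (a + 1) := by
  have h1 : Real.Gamma (a + 1 + 1) = (a + 1) * Real.Gamma (a + 1) :=
    Real.Gamma_add_one (by positivity)
  have hle := Nat.floor_le ha
  have hlt := Nat.lt_floor_add_one a
  set m := ⌊a⌋₊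
  have h2 : Real.Gamma (((m + 1 : ℕ) : ℝ) + 1) ≤ Real.Gamma (a + 1 + 1) := by
    apply Real.Gamma_strictMonoOn_Ici.monotoneOn
    · simp only [Set.mem_Ici]; push_cast; have : (0 : ℝ) ≤ m := by positivity
      linarith
    · simp only [Set.mem_Ici]; linarith
    · push_cast; linarith
  rw [Real.Gamma_nat_eq_factorial, Nat.factorial_succ] at h2
  push_cast at h2
  have hf : (0 : ℝ) < m.factorial := by positivity
  have hm : (0 : ℝ) ≤ m := by positivity
  rw [h1] at h2
  by_contra hcon
  push Not at hcon
  have h3 : (a + 1) * Real.Gamma (a + 1) < (m + 2) * ((m.factorial : ℝ) / 2) := by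
    have hG : 0 < Real.Gamma (a + 1) := Real.Gamma_pos_of_pos (by linarith)
    apply mul_lt_mul'' _ hcon (by linarith) hG.le
    linarith
  nlinarith

lemma gamma_upper {a : ℝ} {m : ℕ} (ha : 0 ≤ a) (hm : a ≤ m + 1) :
    Real.Gamma (a + 1) ≤ ((m + 2).factorial : ℝ) := by
  have h1 : Real.Gamma (a + 1 + 1) = (a + 1) * Real.Gamma (a + 1) :=
    Real.Gamma_add_one (by positivity)
  have h2 : Real.Gamma (a + 1 + 1) ≤ Real.Gamma (((m + 2 : ℕ) : ℝ) + 1) := by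
    apply Real.Gamma_strictMonoOn_Ici.monotoneOn
    · simp only [Set.mem_Ici]; linarith
    · simp only [Set.mem_Ici]; push_cast; have : (0 : ℝ) ≤ m := by positivity
      linarith
    · push_cast; linarith
  rw [Real.Gamma_nat_eq_factorial] at h2
  have hG : 0 < Real.Gamma (a + 1) := Real.Gamma_pos_of_pos (by linarith)
  nlinarith

lemma ml_term_pos {ν w : ℝ} (hν : 0 < ν) (hw : 0 ≤ w) (k : ℕ) :
    0 ≤ w ^ k / Real.Gamma (ν * k + 1) := by
  have : 0 < Real.Gamma (ν * k + 1) := Real.Gamma_pos_of_pos (by positivity)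
  positivity

lemma ml_term_le {ν s δ : ℝ} (hν : 0 < ν) (hs : 1 ≤ s) (hδ : 0 < δ) (k : ℕ) :
    (s ^ ν) ^ k / Real.Gamma (ν * k + 1)
      ≤ 2 * s * (1 + δ) * Real.exp ((1 + δ) * s) * ((1 + δ) ^ (-ν)) ^ k := by
  have ha : 0 ≤ ν * k := by positivity
  have hs0 : 0 < s := by linarith
  have hd0 : 0 < 1 + δ := by linarith
  have hG : 0 < Real.Gamma (ν * k + 1) := Real.Gamma_pos_of_pos (by positivity)
  have hlow := gamma_lower ha
  have hle := Nat.floor_le ha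
  have hlt := Nat.lt_floor_add_one (ν * k)
  set m := ⌊ν * k⌋₊
  have hf : (0 : ℝ) < m.factorial := by positivity
  rw [← Real.rpow_natCast, ← Real.rpow_mul hs0.le, ← Real.rpow_natCast, ← Real.rpow_mul hd0.le]
  have h1 : s ^ (ν * k) ≤ s ^ m * s := by
    rw [← pow_succ, ← Real.rpow_natCast]
    apply Real.rpow_le_rpow_of_exponent_le hs
    push_cast; linarith
  have h2 := Real.pow_div_factorial_le_exp ((1 + δ) * s) (by positivity) m
  rw [div_le_iff₀ hf, mul_pow] at h2
  have h3 : 1 ≤ (1 + δ) ^ m * ((1 + δ) * (1 + δ) ^ (-ν * k)) := by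
    rw [← mul_assoc, ← pow_succ, ← Real.rpow_natCast, ← Real.rpow_add hd0]
    apply Real.one_le_rpow (by linarith)
    push_cast; linarith
  rw [div_le_iff₀ hG]
  have hR : 0 < (1 + δ) * (1 + δ) ^ (-ν * k) := by positivity
  set R := (1 + δ) * (1 + δ) ^ (-ν * k) with hRdef
  calc s ^ (ν * k) ≤ s ^ m * s := h1
    _ ≤ s ^ m * s * ((1 + δ) ^ m * R) := le_mul_of_one_le_right (by positivity) h3
    _ = ((1 + δ) ^ m * s ^ m) * (s * R) := by ring
    _ ≤ (Real.exp ((1 + δ) * s) * m.factorial) * (s * R) := by gcongr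
    _ = 2 * s * (1 + δ) * Real.exp ((1 + δ) * s) * (1 + δ) ^ (-ν * k) * (m.factorial / 2) := by
        rw [hRdef]; ring
    _ ≤ _ := by gcongr

lemma ml_ratio {ν δ : ℝ} (hν : 0 < ν) (hδ : 0 < δ) : (1 + δ) ^ (-ν) < 1 :=
  Real.rpow_lt_one_of_one_lt_of_neg (by linarith) (by linarith)

lemma ml_summable {ν w : ℝ} (hν : 0 < ν) (hw : 0 ≤ w) :
    Summable (fun k : ℕ => w ^ k / Real.Gamma (ν * k + 1)) := by
  have key : ∀ s : ℝ, 1 ≤ s → Summable (fun k : ℕ => (s ^ ν) ^ k / Real.Gamma (ν * k + 1)) := by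
    intro s hs
    refine Summable.of_nonneg_of_le (ml_term_pos hν (by positivity))
      (ml_term_le hν hs one_pos) ?_
    exact (summable_geometric_of_lt_one (by positivity) (ml_ratio hν one_pos)).mul_left _
  have h1 := key ((max w 1) ^ (1 / ν)) (Real.one_le_rpow (le_max_right _ _) (by positivity))
  rw [← Real.rpow_mul (by positivity), one_div, inv_mul_cancel₀ hν.ne', Real.rpow_one] at h1
  refine Summable.of_nonneg_of_le (ml_term_pos hν hw) ?_ h1
  intro k
  have : 0 < Real.Gamma (ν * k + 1) := Real.Gamma_pos_of_pos (by positivity)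
  gcongr
  exact le_max_left _ _

lemma ml_mono {ν v w : ℝ} (hν : 0 < ν) (hv : 0 ≤ v) (hvw : v ≤ w) :
    mittagLeffler ν v ≤ mittagLeffler ν w := by
  refine Summable.tsum_le_tsum ?_ (ml_summable hν hv) (ml_summable hν (hv.trans hvw))
  intro k
  have : 0 < Real.Gamma (ν * k + 1) := Real.Gamma_pos_of_pos (by positivity)
  gcongr

lemma ml_one_le {ν w : ℝ} (hν : 0 < ν) (hw : 0 ≤ w) : 1 ≤ mittagLeffler ν w := by
  have := (ml_summable hν hw).le_tsum 0 (fun k _ => ml_term_pos hν hw k)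
  simpa [mittagLeffler] using this

lemma ml_upper {ν δ : ℝ} (hν : 0 < ν) (hδ : 0 < δ) : ∃ C : ℝ, 0 < C ∧ ∀ s : ℝ, 1 ≤ s →
    mittagLeffler ν (s ^ ν) ≤ C * s * Real.exp ((1 + δ) * s) := by
  have hr := ml_ratio hν hδ
  have hr0 : 0 ≤ (1 + δ) ^ (-ν) := by positivity
  refine ⟨2 * (1 + δ) * (1 - (1 + δ) ^ (-ν))⁻¹, ?_, ?_⟩
  · have : 0 < 1 - (1 + δ) ^ (-ν) := by linarith
    positivity
  intro s hs
  have h := Summable.tsum_le_tsum (ml_term_le hν hs hδ) (ml_summable hν (by positivity))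
    ((summable_geometric_of_lt_one hr0 hr).mul_left _)
  rw [tsum_mul_left, tsum_geometric_of_lt_one hr0 hr] at h
  refine h.trans (le_of_eq ?_)
  ring

lemma ml_lower {ν s : ℝ} (hν : ν ∈ Set.Ioo (0 : ℝ) 1) (hs : 1 ≤ s) :
    Real.exp s ≤ 3 * s ^ 2 * mittagLeffler ν (s ^ ν) := by
  obtain ⟨hν0, hν1⟩ := hν
  have hs0 : 0 < s := by linarith
  have hw : 0 ≤ s ^ ν := by positivity
  have hE := ml_one_le hν0 hw
  have hsum := ml_summable hν0 hw
  have hinj : Function.Injective (fun m : ℕ => ⌈(m : ℝ) / ν⌉₊) := by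
    apply StrictMono.injective
    apply strictMono_nat_of_lt_succ
    intro m
    refine Nat.lt_ceil.2 ?_
    have hlt := Nat.ceil_lt_add_one (show 0 ≤ (m : ℝ) / ν by positivity)
    have h1 : 1 < 1 / ν := by rw [lt_div_iff₀ hν0]; linarith
    push_cast
    rw [add_div]
    linarith
  have h1 := tsum_comp_le_tsum_of_inj hsum (ml_term_pos hν0 hw) hinj
  have hexp : HasSum (fun n : ℕ => s ^ n / (n.factorial : ℝ)) (Real.exp s) := by
    rw [Real.exp_eq_exp_ℝ]; exact NormedSpace.expSeries_div_hasSum_exp s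
  have h2 := hexp.summable.sum_add_tsum_nat_add 2
  rw [hexp.tsum_eq] at h2
  have hs2 := ((summable_nat_add_iff 2).2 hexp.summable)
  have h3 : ∑' m : ℕ, s ^ (m + 2) / ((m + 2).factorial : ℝ) ≤ s ^ 2 * mittagLeffler ν (s ^ ν) := by
    refine le_trans ?_ (mul_le_mul_of_nonneg_left h1 (by positivity))
    rw [← tsum_mul_left]
    refine Summable.tsum_le_tsum ?_ hs2 ((hsum.comp_injective hinj).mul_left _)
    intro m
    have hle : (m : ℝ) / ν ≤ ⌈(m : ℝ) / ν⌉₊ := Nat.le_ceil _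
    have hlt := Nat.ceil_lt_add_one (show 0 ≤ (m : ℝ) / ν by positivity)
    simp only [Function.comp]
    set k := ⌈(m : ℝ) / ν⌉₊
    rw [div_le_iff₀ hν0] at hle
    have hlt' : ν * k < m + ν := by
      have := mul_lt_mul_of_pos_left hlt hν0
      rw [mul_add, mul_div_cancel₀ _ hν0.ne'] at this
      linarith
    have hG : 0 < Real.Gamma (ν * k + 1) := Real.Gamma_pos_of_pos (by positivity)
    have hGu := gamma_upper (a := ν * k) (m := m) (by positivity) (by linarith)
    have hp : s ^ m ≤ (s ^ ν) ^ k := by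
      rw [← Real.rpow_natCast (s ^ ν), ← Real.rpow_mul hs0.le, ← Real.rpow_natCast]
      apply Real.rpow_le_rpow_of_exponent_le hs
      linarith
    rw [pow_add, mul_comm (s ^ m), mul_div_assoc]
    gcongr
  have h4 : ∑ i ∈ Finset.range 2, s ^ i / (i.factorial : ℝ) = 1 + s := by
    simp [Finset.sum_range_succ]
  rw [h4] at h2
  nlinarith

lemma log_le_lin {η u : ℝ} (hη : 0 < η) (hu : 0 < u) : Real.log u ≤ η * u - Real.log η := by
  have := Real.log_le_sub_one_of_pos (mul_pos hη hu)
  rw [Real.log_mul hη.ne' hu.ne'] at this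
  linarith

lemma ml_key_pos {ν : ℝ} (hν : ν ∈ Set.Ioo (0 : ℝ) 1) {ε : ℝ} (hε : 0 < ε) : ∃ C : ℝ, ∀ s : ℝ,
    0 ≤ s → |Real.log (mittagLeffler ν (s ^ ν)) - s| ≤ ε * s + C := by
  obtain ⟨C, hC0, hC⟩ := ml_upper hν.1 (half_pos hε)
  refine ⟨|Real.log C| + 2 * |Real.log (ε / 2)| + Real.log 3 + 1
    + Real.log (mittagLeffler ν 1), ?_⟩
  intro s hs
  have hν0 := hν.1
  have hE := ml_one_le hν.1 (show 0 ≤ s ^ ν by positivity)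
  have hl0 := Real.log_nonneg hE
  have hl1 := Real.log_nonneg (ml_one_le hν.1 zero_le_one)
  have h30 : 0 < Real.log 3 := Real.log_pos (by norm_num)
  have a1 := abs_nonneg (Real.log C)
  have a2 := abs_nonneg (Real.log (ε / 2))
  have a3 := le_abs_self (Real.log C)
  have a4 := neg_abs_le (Real.log (ε / 2))
  have hes : 0 ≤ ε * s := by positivity
  rcases le_total s 1 with h | h
  · have hm := ml_mono hν.1 (show 0 ≤ s ^ ν by positivity) (Real.rpow_le_one hs h hν.1.le)
    have := Real.log_le_log (by linarith) hm
    rw [abs_le]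
    constructor <;> linarith
  · have hs0 : 0 < s := by linarith
    have h1 := Real.log_le_log (by linarith) (hC s h)
    rw [Real.log_mul (by positivity) (by positivity), Real.log_mul (by positivity) (by positivity),
      Real.log_exp] at h1
    have h2 := Real.log_le_log (by positivity) (ml_lower hν h)
    rw [Real.log_exp, Real.log_mul (by positivity) (by positivity),
      Real.log_mul (by positivity) (by positivity), Real.log_pow] at h2
    have h3 := log_le_lin (half_pos hε) hs0
    push_cast at h2
    rw [abs_le]
    constructor <;> linarith

lemma ml_key_neg {ν : ℝ} (hν : ν ∈ Set.Ioo (0 : ℝ) 1) {ε : ℝ} (hε : 0 < ε) : ∃ C : ℝ, ∀ s : ℝ,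
    0 < s → |Real.log (mittagLeffler ν (-(s ^ ν)))| ≤ ε * s + C := by
  have hGp : 0 < Real.Gamma (1 - ν) := Real.Gamma_pos_of_pos (by linarith [hν.2])
  set c := 1 / Real.Gamma (1 - ν) with hc
  have hc0 : 0 < c := by positivity
  refine ⟨ε * (c + 1) - Real.log ε - Real.log c, ?_⟩
  intro s hs
  have hz : 0 < s ^ ν := by positivity
  obtain ⟨h1, h2⟩ := ml_neg_bounds hν hz
  rw [← hc] at h1
  have hzs : s ^ ν ≤ 1 + s := by
    rcases le_total s 1 with h | h
    · have := Real.rpow_le_one hs.le h hν.1.le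
      linarith
    · have := Real.rpow_le_rpow_of_exponent_le h hν.2.le
      rw [Real.rpow_one] at this
      linarith
  have hpos : 0 < c / (c + s ^ ν) := by positivity
  have h3 := Real.log_le_log hpos h1
  rw [Real.log_div (by positivity) (by positivity)] at h3
  have h4 := log_le_lin hε (show 0 < c + s ^ ν by positivity)
  have h5 := Real.log_nonpos (by linarith) h2
  have h6 : ε * (c + s ^ ν) ≤ ε * (c + (1 + s)) := by gcongr
  rw [abs_of_nonpos h5]
  linarith

lemma ml_key {ν : ℝ} (hν : ν ∈ Set.Ioo (0 : ℝ) 1) {ε : ℝ} (hε : 0 < ε) : ∃ C : ℝ, ∀ x g : ℝ,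
    0 < x → |(1 / x) * Real.log (mittagLeffler ν (g * x ^ ν)) - (max g 0) ^ (1 / ν)|
      ≤ ε * |g| ^ (1 / ν) + C / x := by
  obtain ⟨C₁, h₁⟩ := ml_key_pos hν hε
  obtain ⟨C₂, h₂⟩ := ml_key_neg hν hε
  have hν0 := hν.1
  refine ⟨max C₁ C₂, ?_⟩
  intro x g hx
  have hs : (|g| ^ (1 / ν) * x) ^ ν = |g| * x ^ ν := by
    rw [Real.mul_rpow (by positivity) hx.le, ← Real.rpow_mul (abs_nonneg g), one_div,
      inv_mul_cancel₀ hν0.ne', Real.rpow_one]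
  have main : ∀ L M : ℝ, |L - M * x| ≤ ε * (|g| ^ (1 / ν) * x) + max C₁ C₂ →
      |(1 / x) * L - M| ≤ ε * |g| ^ (1 / ν) + max C₁ C₂ / x := by
    intro L M h
    rw [show (1 / x) * L - M = (L - M * x) / x by field_simp, abs_div, abs_of_pos hx,
      div_le_iff₀ hx]
    refine h.trans (le_of_eq ?_)
    field_simp
  apply main
  rcases le_or_gt 0 g with h | h
  · have := h₁ (|g| ^ (1 / ν) * x) (by positivity)
    rw [hs] at this
    rw [abs_of_nonneg h] at this ⊢
    rw [max_eq_left h]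
    linarith [le_max_left C₁ C₂]
  · have hg : 0 < |g| := abs_pos.2 h.ne
    have := h₂ (|g| ^ (1 / ν) * x) (by positivity)
    rw [hs, abs_of_neg h, neg_mul, neg_neg] at this
    rw [max_eq_right h.le, Real.zero_rpow (by positivity), zero_mul, sub_zero, abs_of_neg h]
    linarith [le_max_right C₁ C₂]

/-- Robust Mittag-Leffler limit: for `ν ∈ (0,1)`, if `x_t → ∞` and `g_t → y ∈ ℝ`, then
`lim_{t→∞} (1/x_t) log E_ν(g_t x_t^ν) = (max(y,0))^{1/ν}`. -/
theorem stmt_19 (ν : ℝ) (hν : ν ∈ Set.Ioo (0 : ℝ) 1) (x g : ℝ → ℝ) (y : ℝ)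
    (hx : Filter.Tendsto x Filter.atTop Filter.atTop)
    (hg : Filter.Tendsto g Filter.atTop (nhds y)) :
    Filter.Tendsto (fun t : ℝ => (1 / x t) * Real.log (mittagLeffler ν (g t * (x t) ^ ν)))
      Filter.atTop (nhds ((max y 0) ^ (1 / ν))) := by
  have hν0 := hν.1
  have hp : 0 ≤ 1 / ν := by positivity
  have hmax : Tendsto (fun t => (max (g t) 0) ^ (1 / ν)) atTop (nhds ((max y 0) ^ (1 / ν))) :=
    (hg.max tendsto_const_nhds).rpow_const (Or.inr hp)
  have habs : Tendsto (fun t => |g t| ^ (1 / ν)) atTop (nhds (|y| ^ (1 / ν))) :=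
    hg.abs.rpow_const (Or.inr hp)
  have hdiff : Tendsto (fun t : ℝ => (1 / x t) * Real.log (mittagLeffler ν (g t * (x t) ^ ν))
      - (max (g t) 0) ^ (1 / ν)) atTop (nhds 0) := by
    rw [Metric.tendsto_nhds]
    intro e he
    set A := |y| ^ (1 / ν) with hA
    have hA0 : 0 ≤ A := by positivity
    have hε : 0 < e / (2 * (A + 1)) := by positivity
    obtain ⟨C, hC⟩ := ml_key hν hε
    have hlim : Tendsto (fun t => e / (2 * (A + 1)) * |g t| ^ (1 / ν) + C / x t) atTop
        (nhds (e / (2 * (A + 1)) * A + 0)) :=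
      (habs.const_mul _).add (hx.const_div_atTop C)
    have hlt : e / (2 * (A + 1)) * A + 0 < e := by
      rw [add_zero, div_mul_eq_mul_div, div_lt_iff₀ (by positivity)]
      nlinarith
    filter_upwards [hlim.eventually (gt_mem_nhds hlt), hx.eventually_gt_atTop 0] with t h1 h2
    rw [Real.dist_eq, sub_zero]
    exact lt_of_le_of_lt (hC (x t) (g t) h2) h1
  have := hdiff.add hmax
  simpa using this
end
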